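/- Let G be a connected graph of order n₁ and let n₂ ≥ 2 be an integer. If n₁ > 2n₂ + 1, then pd(G⊙K_{n₂}) ≥ n₂ + 2. -/

import Mathlib

/-!
Let `P` be a resolving partition of `G ⊙ K_n` with at most `n + 1` cells (`n ≥ 2`); it is shown that
`G` then has at most `n + 2` vertices, which contradicts `n₁ > 2n + 1`.

The distance from a vertex of the `i`-th copy of `K_n` to a cell `A` is `0` or `1` if `A` meets that
copy, and `d(i, A) + 1` otherwise (`setDist_inr_of_miss`). Hence the `n` vertices of a copy lie in
`n` different cells (`cell_injective`), so every copy misses at most one cell.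

Call `i` *near* if each cell meets the `i`-th copy or contains `i`. All the vertices of a near copy
are at distance at most one from every cell, and any two copies meet a common cell, so there is at
most one near vertex (`near_unique`). Every other `i` misses exactly one cell `A`, with
`D i = d(i, A) ≥ 1`. If `i` and `j` both miss `A`, comparing two copy vertices in a common cell gives
`D i ≠ D j` unless `i = j`, and comparing `i` with the vertex of the `j`-th copy in the cell of `i`
gives `D i ≠ D j + 1`. If `D i ≥ 3`, a neighbour of `i` in `G` also misses `A`, at distance differing
from `D i` by at most one, which is impossible. So `D ∈ {1, 2}`, and at most one vertex misses each
cell (`miss_unique`).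
-/

open SimpleGraph

/-- The corona product `G ⊙ H`: one copy of `G`, one copy of `H` for each vertex of `G`,
with the `i`-th vertex of `G` joined to every vertex of the `i`-th copy of `H`. -/
def corona {α β : Type*} (G : SimpleGraph α) (H : SimpleGraph β) :
    SimpleGraph (α ⊕ α × β) :=
  SimpleGraph.fromRel (fun x y =>
    match x, y with
    | Sum.inl a, Sum.inl b => G.Adj a b
    | Sum.inl a, Sum.inr iu => a = iu.1
    | Sum.inr iu, Sum.inr jw => iu.1 = jw.1 ∧ H.Adj iu.2 jw.2
    | _, _ => False)

/-- The distance from a vertex to a set of vertices: `d(v,A) = min_{u ∈ A} d(v,u)`. -/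
noncomputable def setDist {α : Type*} (G : SimpleGraph α) (v : α) (A : Set α) : ℕ :=
  sInf (G.dist v '' A)

/-- `S` is a resolving set for `G`: distinct vertices have distinct metric representations. -/
def IsResolvingSet {α : Type*} (G : SimpleGraph α) (S : Set α) : Prop :=
  ∀ u v : α, (∀ w ∈ S, G.dist u w = G.dist v w) → u = v

/-- The metric dimension of `G`: minimum cardinality of a resolving set. -/
noncomputable def metricDim {α : Type*} (G : SimpleGraph α) : ℕ :=
  sInf {k | ∃ S : Set α, IsResolvingSet G S ∧ S.ncard = k}

/-- A family of sets is a resolving partition for `G` if it is a partition of the vertex set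
into nonempty cells and distinct vertices have distinct partition representations. -/
def IsResolvingPartition {α : Type*} (G : SimpleGraph α) (P : Set (Set α)) : Prop :=
  (∀ A ∈ P, A.Nonempty) ∧ (∀ v : α, ∃! A : Set α, A ∈ P ∧ v ∈ A) ∧
    ∀ u v : α, (∀ A ∈ P, setDist G u A = setDist G v A) → u = v

/-- The partition dimension of `G`: minimum number of cells in a resolving partition. -/
noncomputable def partitionDim {α : Type*} (G : SimpleGraph α) : ℕ :=
  sInf {t | ∃ P : Set (Set α), IsResolvingPartition G P ∧ P.ncard = t}

/-- `c(H)`: the maximum cardinality of a connected component of `H` which is isomorphic to a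
complete graph (i.e. whose vertex set is a clique). -/
noncomputable def maxCompleteComp {β : Type*} (H : SimpleGraph β) : ℕ :=
  sSup {k | ∃ C : H.ConnectedComponent, H.IsClique C.supp ∧ C.supp.ncard = k}

/-- `β(H)`: the number of isolated vertices of `H`. -/
noncomputable def numIsolated {β : Type*} (H : SimpleGraph β) : ℕ :=
  Set.ncard {v : β | ∀ u, ¬ H.Adj v u}

/-- `α(H)`: the number of connected components of `H` of order greater than one. -/
noncomputable def numBigComp {β : Type*} (H : SimpleGraph β) : ℕ :=
  Set.ncard {C : H.ConnectedComponent | 1 < C.supp.ncard}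

/-! ### Distance to a set -/

section SetDist

variable {α : Type*} {G : SimpleGraph α}

lemma setDist_le (v : α) {A : Set α} {a : α} (ha : a ∈ A) : setDist G v A ≤ G.dist v a :=
  Nat.sInf_le ⟨a, ha, rfl⟩

lemma exists_setDist_eq (v : α) {A : Set α} (hA : A.Nonempty) :
    ∃ a ∈ A, G.dist v a = setDist G v A :=
  Nat.sInf_mem (hA.image (G.dist v))

lemma setDist_eq_zero {v : α} {A : Set α} (h : v ∈ A) : setDist G v A = 0 := by
  have := setDist_le (G := G) v h
  simpa using this

lemma setDist_pos (hc : G.Connected) {v : α} {A : Set α} (hA : A.Nonempty) (h : v ∉ A) :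
    1 ≤ setDist G v A := by
  obtain ⟨a, ha, h'⟩ := exists_setDist_eq (G := G) v hA
  rw [← h']
  exact hc.pos_dist_of_ne (by rintro rfl; exact h ha)

lemma setDist_le_of_adj (hc : G.Connected) {v w : α} (hvw : G.Adj v w) {A : Set α}
    (hA : A.Nonempty) : setDist G v A ≤ setDist G w A + 1 := by
  obtain ⟨a, ha, h'⟩ := exists_setDist_eq (G := G) w hA
  have h1 := setDist_le (G := G) v ha
  have h2 := hc.dist_triangle (u := v) (v := w) (w := a)
  have h3 : G.dist v w = 1 := SimpleGraph.dist_eq_one_iff_adj.2 hvw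
  omega

lemma setDist_eq_one (hc : G.Connected) {v w : α} (hvw : G.Adj v w) {A : Set α}
    (hv : v ∉ A) (hw : w ∈ A) : setDist G v A = 1 := by
  have h1 := setDist_pos hc ⟨w, hw⟩ hv
  have h2 := setDist_le_of_adj hc hvw ⟨w, hw⟩
  rw [setDist_eq_zero hw] at h2
  omega

/-- In a connected graph the partition into singletons is resolving, so the infimum defining the
partition dimension is attained. -/
lemma exists_resolvingPartition (hc : G.Connected) :
    ∃ P : Set (Set α), IsResolvingPartition G P ∧ P.ncard = partitionDim G := by
  have hne : {t | ∃ P : Set (Set α), IsResolvingPartition G P ∧ P.ncard = t}.Nonempty := by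
    refine ⟨_, Set.range (fun a : α => ({a} : Set α)), ⟨?_, ?_, ?_⟩, rfl⟩
    · rintro _ ⟨a, rfl⟩
      exact Set.singleton_nonempty a
    · intro v
      refine ⟨{v}, ⟨⟨v, rfl⟩, rfl⟩, ?_⟩
      rintro _ ⟨⟨a, rfl⟩, hv⟩
      have : v = a := hv
      rw [this]
    · intro u v h
      have h1 := h {v} ⟨v, rfl⟩
      by_contra hne
      have h2 := setDist_pos hc (Set.singleton_nonempty v) (v := u) hne
      rw [h1, setDist_eq_zero (Set.mem_singleton v)] at h2
      omega
  exact Nat.sInf_mem hne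

end SetDist

/-! ### Distances in the corona -/

section Corona

variable {V : Type*} {G : SimpleGraph V} {n : ℕ}

lemma corona_adj_inl {i j : V} (h : G.Adj i j) :
    (corona G (⊤ : SimpleGraph (Fin n))).Adj (Sum.inl i) (Sum.inl j) := by
  simp [corona, h, h.ne]

lemma corona_adj_inl_inr (i : V) (u : Fin n) :
    (corona G (⊤ : SimpleGraph (Fin n))).Adj (Sum.inl i) (Sum.inr (i, u)) := by
  simp [corona]

lemma corona_adj_inr (i : V) {u w : Fin n} (h : u ≠ w) :
    (corona G (⊤ : SimpleGraph (Fin n))).Adj (Sum.inr (i, u)) (Sum.inr (i, w)) := by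
  simp [corona, h]

/-- A vertex of the `i`-th copy is adjacent only to `i` and to vertices of the same copy. -/
lemma corona_adj_inr_cases {i : V} {u : Fin n} {x : V ⊕ V × Fin n}
    (h : (corona G (⊤ : SimpleGraph (Fin n))).Adj (Sum.inr (i, u)) x) :
    x = Sum.inl i ∨ ∃ w, x = Sum.inr (i, w) := by
  rcases x with a | ⟨a, w⟩
  · simp [corona] at h
    simp [h]
  · right
    simp [corona] at h
    refine ⟨w, ?_⟩
    rcases h.2 with h | h <;> simp [h.1]

lemma corona_connected (hG : G.Connected) :
    (corona G (⊤ : SimpleGraph (Fin n))).Connected := by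
  obtain ⟨r⟩ := hG.nonempty
  have h1 : ∀ i, (corona G (⊤ : SimpleGraph (Fin n))).Reachable (Sum.inl r) (Sum.inl i) := by
    intro i
    let f : G →g corona G (⊤ : SimpleGraph (Fin n)) := ⟨Sum.inl, fun h => corona_adj_inl h⟩
    exact (hG.preconnected r i).map f
  have h2 : ∀ x, (corona G (⊤ : SimpleGraph (Fin n))).Reachable (Sum.inl r) x := by
    rintro (i | ⟨i, u⟩)
    · exact h1 i
    · exact (h1 i).trans (corona_adj_inl_inr i u).reachable
  have : Nonempty (V ⊕ V × Fin n) := ⟨Sum.inl r⟩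
  exact ⟨fun x y => (h2 x).symm.trans (h2 y)⟩

/-- A walk leaving the `i`-th copy has to pass through `i`. -/
lemma dist_succ_le_length {i : V} {y x : V ⊕ V × Fin n}
    (p : (corona G (⊤ : SimpleGraph (Fin n))).Walk y x) (hx : ∀ w, x ≠ Sum.inr (i, w))
    (hy : ∃ u, y = Sum.inr (i, u)) :
    (corona G (⊤ : SimpleGraph (Fin n))).dist (Sum.inl i) x + 1 ≤ p.length := by
  induction p with
  | nil => obtain ⟨u, rfl⟩ := hy; exact absurd rfl (hx u)
  | cons h p ih =>
    obtain ⟨u, rfl⟩ := hy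
    rcases corona_adj_inr_cases h with rfl | hw
    · have := SimpleGraph.dist_le p
      simpa using this
    · have := ih hx hw
      simp only [SimpleGraph.Walk.length_cons]
      omega

lemma setDist_inr_of_miss (hG : G.Connected) {i : V} (u : Fin n) {A : Set (V ⊕ V × Fin n)}
    (hA : A.Nonempty) (hm : ∀ w, Sum.inr (i, w) ∉ A) :
    setDist (corona G (⊤ : SimpleGraph (Fin n))) (Sum.inr (i, u)) A =
      setDist (corona G (⊤ : SimpleGraph (Fin n))) (Sum.inl i) A + 1 := by
  have hc := corona_connected (n := n) hG
  apply le_antisymm (setDist_le_of_adj hc (corona_adj_inl_inr i u).symm hA)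
  obtain ⟨a, ha, h'⟩ :=
    exists_setDist_eq (G := corona G (⊤ : SimpleGraph (Fin n))) (Sum.inr (i, u)) hA
  obtain ⟨p, hp⟩ := hc.exists_walk_length_eq_dist (Sum.inr (i, u)) a
  have h1 := dist_succ_le_length (i := i) p (by rintro w rfl; exact hm w ha) ⟨u, rfl⟩
  have h2 := setDist_le (G := corona G (⊤ : SimpleGraph (Fin n))) (Sum.inl i) ha
  omega

lemma setDist_inr_of_meet (hG : G.Connected) {i : V} {u w : Fin n} {A : Set (V ⊕ V × Fin n)}
    (hu : Sum.inr (i, u) ∉ A) (hw : Sum.inr (i, w) ∈ A) :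
    setDist (corona G (⊤ : SimpleGraph (Fin n))) (Sum.inr (i, u)) A = 1 :=
  setDist_eq_one (corona_connected hG) (corona_adj_inr i (by rintro rfl; exact hu hw)) hu hw

/-! ### Resolving partitions of the corona -/

variable {P : Set (Set (V ⊕ V × Fin n))}

/-- Cells of a partition that share a vertex are equal. -/
lemma cell_eq (hP : IsResolvingPartition (corona G (⊤ : SimpleGraph (Fin n))) P)
    {x : V ⊕ V × Fin n} {A B : Set (V ⊕ V × Fin n)} (hA : A ∈ P) (hB : B ∈ P)
    (hxA : x ∈ A) (hxB : x ∈ B) : A = B :=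
  (hP.2.1 x).unique ⟨hA, hxA⟩ ⟨hB, hxB⟩

/-- Vertices of the same copy are twins, so a resolving partition separates them. -/
lemma cell_injective (hG : G.Connected)
    (hP : IsResolvingPartition (corona G (⊤ : SimpleGraph (Fin n))) P) {i : V} {u w : Fin n}
    {A : Set (V ⊕ V × Fin n)} (hA : A ∈ P) (hu : Sum.inr (i, u) ∈ A) (hw : Sum.inr (i, w) ∈ A) :
    u = w := by
  have : (Sum.inr (i, u) : V ⊕ V × Fin n) = Sum.inr (i, w) := by
    apply hP.2.2
    intro B hB
    by_cases hBA : B = A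
    · subst hBA
      rw [setDist_eq_zero hu, setDist_eq_zero hw]
    have hu' : Sum.inr (i, u) ∉ B := fun h => hBA (cell_eq hP hB hA h hu)
    have hw' : Sum.inr (i, w) ∉ B := fun h => hBA (cell_eq hP hB hA h hw)
    by_cases hm : ∃ z, Sum.inr (i, z) ∈ B
    · obtain ⟨z, hz⟩ := hm
      rw [setDist_inr_of_meet hG hu' hz, setDist_inr_of_meet hG hw' hz]
    · push Not at hm
      rw [setDist_inr_of_miss hG u (hP.1 B hB) hm, setDist_inr_of_miss hG w (hP.1 B hB) hm]
  simpa using this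

/-- The set of cells that meet the `i`-th copy. -/
def metCells (P : Set (Set (V ⊕ V × Fin n))) (i : V) : Set (Set (V ⊕ V × Fin n)) :=
  {A | A ∈ P ∧ ∃ u, Sum.inr (i, u) ∈ A}

lemma ncard_metCells (hG : G.Connected) (hfin : P.Finite)
    (hP : IsResolvingPartition (corona G (⊤ : SimpleGraph (Fin n))) P) (i : V) :
    n ≤ (metCells P i).ncard := by
  choose c hc _ using fun u : Fin n => hP.2.1 (Sum.inr (i, u))
  have h := Set.ncard_le_ncard_of_injOn (s := (Set.univ : Set (Fin n))) (t := metCells P i) c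
    (fun u _ => ⟨(hc u).1, u, (hc u).2⟩)
    (fun u _ w _ huw => by
      have h1 : c u = c w := huw
      exact cell_injective hG hP (hc u).1 (hc u).2 (h1 ▸ (hc w).2))
    (hfin.subset fun A hA => hA.1)
  simpa [Set.ncard_univ] using h

/-- `i` misses the cell `A`: neither `i` nor the `i`-th copy has a vertex in `A`. -/
def Misses (i : V) (A : Set (V ⊕ V × Fin n)) : Prop :=
  Sum.inl i ∉ A ∧ ∀ u, Sum.inr (i, u) ∉ A

/-- A copy missing the cell `A` meets every other cell. -/
lemma meets_of_misses (hG : G.Connected) (hfin : P.Finite) (hcard : P.ncard ≤ n + 1)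
    (hP : IsResolvingPartition (corona G (⊤ : SimpleGraph (Fin n))) P) {i : V}
    {A B : Set (V ⊕ V × Fin n)} (hA : A ∈ P) (hi : Misses i A) (hB : B ∈ P) (hBA : B ≠ A) :
    ∃ u, Sum.inr (i, u) ∈ B := by
  by_contra hm
  have h1 := ncard_metCells hG hfin hP i
  have hsub : metCells P i ⊆ P \ {A, B} := by
    rintro C ⟨hC, u, hu⟩
    refine ⟨hC, ?_⟩
    rintro (rfl | rfl)
    · exact hi.2 u hu
    · exact hm ⟨u, hu⟩
  have h2 := Set.ncard_le_ncard hsub (hfin.subset Set.sdiff_subset)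
  have h3 : ({A, B} : Set (Set (V ⊕ V × Fin n))).ncard = 2 := Set.ncard_pair (Ne.symm hBA)
  have h4 : ({A, B} : Set (Set (V ⊕ V × Fin n))) ⊆ P := by
    rintro C (rfl | rfl) <;> assumption
  have h5 := Set.ncard_sdiff_add_ncard_of_subset h4 hfin
  omega

/-- At most one vertex of `G` misses no cell. -/
lemma near_unique (hG : G.Connected) (hfin : P.Finite) (hcard : P.ncard ≤ n + 1) (hn : 2 ≤ n)
    (hP : IsResolvingPartition (corona G (⊤ : SimpleGraph (Fin n))) P) {i j : V}
    (hi : ∀ A ∈ P, ¬ Misses i A) (hj : ∀ A ∈ P, ¬ Misses j A) : i = j := by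
  have hc := corona_connected (n := n) hG
  -- Two disjoint families of `n` cells would need `2 * n > n + 1` cells.
  obtain ⟨A, ⟨hA, u, hu⟩, ⟨-, w, hw⟩⟩ : (metCells P i ∩ metCells P j).Nonempty := by
    rw [← Set.not_disjoint_iff_nonempty_inter]
    intro hd
    have hsi : metCells P i ⊆ P := fun A hA => hA.1
    have hsj : metCells P j ⊆ P := fun A hA => hA.1
    have h1 := Set.ncard_union_eq hd (hfin.subset hsi) (hfin.subset hsj)
    have h2 := Set.ncard_le_ncard (Set.union_subset hsi hsj) hfin
    have h3 := ncard_metCells hG hfin hP i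
    have h4 := ncard_metCells hG hfin hP j
    omega
  have key : ∀ (k : V) (z : Fin n), Sum.inr (k, z) ∈ A → (∀ B ∈ P, ¬ Misses k B) →
      ∀ B ∈ P, B ≠ A →
        setDist (corona G (⊤ : SimpleGraph (Fin n))) (Sum.inr (k, z)) B = 1 := by
    intro k z hz hk B hB hBA
    have hz' : Sum.inr (k, z) ∉ B := fun h => hBA (cell_eq hP hB hA h hz)
    by_cases hl : Sum.inl k ∈ B
    · exact setDist_eq_one hc (corona_adj_inl_inr k z).symm hz' hl
    · by_cases hm : ∃ y, Sum.inr (k, y) ∈ B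
      · obtain ⟨y, hy⟩ := hm
        exact setDist_inr_of_meet hG hz' hy
      · push Not at hm
        exact absurd ⟨hl, hm⟩ (hk B hB)
  have : (Sum.inr (i, u) : V ⊕ V × Fin n) = Sum.inr (j, w) := by
    apply hP.2.2
    intro B hB
    by_cases hBA : B = A
    · subst hBA
      rw [setDist_eq_zero hu, setDist_eq_zero hw]
    · rw [key i u hu hi B hB hBA, key j w hw hj B hB hBA]
  simp at this
  exact this.1

/-- Two vertices missing the same cell at the same distance coincide. -/
lemma eq_of_setDist_eq (hG : G.Connected) (hfin : P.Finite) (hcard : P.ncard ≤ n + 1) (hn : 2 ≤ n)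
    (hP : IsResolvingPartition (corona G (⊤ : SimpleGraph (Fin n))) P) {i j : V}
    {A : Set (V ⊕ V × Fin n)} (hA : A ∈ P) (hi : Misses i A) (hj : Misses j A)
    (hD : setDist (corona G (⊤ : SimpleGraph (Fin n))) (Sum.inl i) A =
      setDist (corona G (⊤ : SimpleGraph (Fin n))) (Sum.inl j) A) : i = j := by
  let u : Fin n := ⟨0, by omega⟩
  obtain ⟨B, ⟨hB, hu⟩, -⟩ := hP.2.1 (Sum.inr (i, u))
  have hBA : B ≠ A := by rintro rfl; exact hi.2 u hu
  obtain ⟨w, hw⟩ := meets_of_misses hG hfin hcard hP hA hj hB hBA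
  have : (Sum.inr (i, u) : V ⊕ V × Fin n) = Sum.inr (j, w) := by
    apply hP.2.2
    intro C hC
    by_cases hCB : C = B
    · subst hCB
      rw [setDist_eq_zero hu, setDist_eq_zero hw]
    by_cases hCA : C = A
    · subst hCA
      rw [setDist_inr_of_miss hG u (hP.1 C hC) hi.2, setDist_inr_of_miss hG w (hP.1 C hC) hj.2, hD]
    obtain ⟨y, hy⟩ := meets_of_misses hG hfin hcard hP hA hi hC hCA
    obtain ⟨z, hz⟩ := meets_of_misses hG hfin hcard hP hA hj hC hCA
    rw [setDist_inr_of_meet hG (fun h => hCB (cell_eq hP hC hB h hu)) hy,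
      setDist_inr_of_meet hG (fun h => hCB (cell_eq hP hC hB h hw)) hz]
  simp at this
  exact this.1

/-- The distances from two vertices to a cell missed by both cannot be consecutive: otherwise `i`
would have the same representation as the vertex of the `j`-th copy lying in the cell of `i`. -/
lemma setDist_ne_succ (hG : G.Connected) (hfin : P.Finite) (hcard : P.ncard ≤ n + 1)
    (hP : IsResolvingPartition (corona G (⊤ : SimpleGraph (Fin n))) P) {i j : V}
    {A : Set (V ⊕ V × Fin n)} (hA : A ∈ P) (hi : Misses i A) (hj : Misses j A) :
    setDist (corona G (⊤ : SimpleGraph (Fin n))) (Sum.inl i) A ≠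
      setDist (corona G (⊤ : SimpleGraph (Fin n))) (Sum.inl j) A + 1 := by
  intro hD
  obtain ⟨B, ⟨hB, hu⟩, -⟩ := hP.2.1 (Sum.inl i)
  have hBA : B ≠ A := by rintro rfl; exact hi.1 hu
  obtain ⟨w, hw⟩ := meets_of_misses hG hfin hcard hP hA hj hB hBA
  have : (Sum.inl i : V ⊕ V × Fin n) = Sum.inr (j, w) := by
    apply hP.2.2
    intro C hC
    by_cases hCB : C = B
    · subst hCB
      rw [setDist_eq_zero hu, setDist_eq_zero hw]
    by_cases hCA : C = A
    · subst hCA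
      rw [setDist_inr_of_miss hG w (hP.1 C hC) hj.2, hD]
    obtain ⟨y, hy⟩ := meets_of_misses hG hfin hcard hP hA hi hC hCA
    obtain ⟨z, hz⟩ := meets_of_misses hG hfin hcard hP hA hj hC hCA
    rw [setDist_eq_one (corona_connected hG) (corona_adj_inl_inr i y)
        (fun h => hCB (cell_eq hP hC hB h hu)) hy,
      setDist_inr_of_meet hG (fun h => hCB (cell_eq hP hC hB h hw)) hz]
  simp at this

lemma setDist_le_two [Nontrivial V] (hG : G.Connected) (hfin : P.Finite) (hcard : P.ncard ≤ n + 1)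
    (hn : 2 ≤ n) (hP : IsResolvingPartition (corona G (⊤ : SimpleGraph (Fin n))) P) {i : V}
    {A : Set (V ⊕ V × Fin n)} (hA : A ∈ P) (hi : Misses i A) :
    setDist (corona G (⊤ : SimpleGraph (Fin n))) (Sum.inl i) A ≤ 2 := by
  by_contra! hD
  have hc := corona_connected (n := n) hG
  have hne := hP.1 A hA
  obtain ⟨k, hk⟩ := hG.preconnected.exists_adj_of_nontrivial i
  have h1 := setDist_le_of_adj hc (corona_adj_inl (n := n) hk) hne
  have h2 := setDist_le_of_adj hc (corona_adj_inl (n := n) hk.symm) hne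
  have hkA : Misses k A := by
    constructor
    · intro h
      rw [setDist_eq_zero h] at h1
      omega
    · intro u h
      have h3 := setDist_le_of_adj hc (corona_adj_inl_inr (G := G) k u) hne
      rw [setDist_eq_zero h] at h3
      omega
  have h3 := setDist_ne_succ hG hfin hcard hP hA hi hkA
  have h4 := setDist_ne_succ hG hfin hcard hP hA hkA hi
  exact hk.ne (eq_of_setDist_eq hG hfin hcard hn hP hA hi hkA (by omega))

lemma miss_unique [Nontrivial V] (hG : G.Connected) (hfin : P.Finite) (hcard : P.ncard ≤ n + 1)
    (hn : 2 ≤ n) (hP : IsResolvingPartition (corona G (⊤ : SimpleGraph (Fin n))) P) {i j : V}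
    {A : Set (V ⊕ V × Fin n)} (hA : A ∈ P) (hi : Misses i A) (hj : Misses j A) : i = j := by
  have hc := corona_connected (n := n) hG
  have h1 := setDist_le_two hG hfin hcard hn hP hA hi
  have h2 := setDist_le_two hG hfin hcard hn hP hA hj
  have h3 := setDist_pos hc (hP.1 A hA) hi.1
  have h4 := setDist_pos hc (hP.1 A hA) hj.1
  have h5 := setDist_ne_succ hG hfin hcard hP hA hi hj
  have h6 := setDist_ne_succ hG hfin hcard hP hA hj hi
  exact eq_of_setDist_eq hG hfin hcard hn hP hA hi hj (by omega)

end Corona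

/-! ### Counting the vertices of the base graph -/

/-- Let `G` be a connected graph of order `n₁` and `n₂ ≥ 2` an integer. If
`n₁ > 2n₂ + 1`, then `pd(G⊙K_{n₂}) ≥ n₂ + 2`. -/
theorem stmt10 {V : Type*} [Fintype V] (G : SimpleGraph V) (hG : G.Connected)
    (n₁ n₂ : ℕ) (hn₁ : Fintype.card V = n₁) (h₂ : 2 ≤ n₂) (h : n₁ > 2 * n₂ + 1) :
    partitionDim (corona G (⊤ : SimpleGraph (Fin n₂))) ≥ n₂ + 2 := by
  by_contra! hlt
  have hc := corona_connected (n := n₂) hG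
  obtain ⟨P, hP, hPc⟩ := exists_resolvingPartition hc
  have hfin : P.Finite := Set.toFinite P
  have hcard : P.ncard ≤ n₂ + 1 := by omega
  have : Nontrivial V := Fintype.one_lt_card_iff_nontrivial.1 (by omega)
  classical
  -- Send a vertex to the cell it misses, and the possible near vertex to `none`.
  let f : V → Option (Set (V ⊕ V × Fin n₂)) := fun i =>
    if hi : ∃ A ∈ P, Misses i A then some hi.choose else none
  have hf : ∀ i A, f i = some A → A ∈ P ∧ Misses i A := by
    intro i A hiA
    by_cases hi : ∃ A ∈ P, Misses i A
    · have h1 : hi.choose = A := by simpa [f, hi] using hiA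
      exact h1 ▸ hi.choose_spec
    · simp only [f, dif_neg hi] at hiA
      cases hiA
  have hf' : ∀ i, f i = none → ∀ A ∈ P, ¬ Misses i A := by
    intro i hi A hA hm
    have hex : ∃ A ∈ P, Misses i A := ⟨A, hA, hm⟩
    simp only [f, dif_pos hex] at hi
    cases hi
  have hle := Set.ncard_le_ncard_of_injOn (s := (Set.univ : Set V)) (t := insert none (some '' P)) f
    (fun i _ => by
      cases hfi : f i with
      | none => exact Set.mem_insert _ _
      | some A => exact Set.mem_insert_of_mem _ ⟨A, (hf i A hfi).1, rfl⟩)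
    (fun i _ j _ hij => by
      cases hfi : f i with
      | none => exact near_unique hG hfin hcard h₂ hP (hf' i hfi) (hf' j (hij ▸ hfi))
      | some A =>
        have h1 := hf i A hfi
        have h2 := hf j A (hij ▸ hfi)
        exact miss_unique hG hfin hcard h₂ hP h1.1 h1.2 h2.2)
    ((hfin.image _).insert _)
  have h3 := Set.ncard_insert_le none (some '' P)
  have h4 := Set.ncard_image_le (f := some) hfin
  rw [Set.ncard_univ, Nat.card_eq_fintype_card] at hle
  omega
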